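/- Let r ∈ ℕ, f : ℝ → ℝ be r times continuously differentiable, and ε : ℝ → ℝ continuous with ε(t) > 0 for all t. Then there exists an entire function g : ℂ → ℂ, real-valued on ℝ, such that |(f − g|_ℝ)^(k)(t)| ≤ ε(t) for all t ∈ ℝ and all k ≤ r. -/

import Mathlib

/-!
Convolving a compactly supported `C^r` function with a narrow Gaussian yields an entire function
whose derivatives of order at most `r` are uniformly close on `ℝ`. If the function vanishes on
`|t| < ρ`, the result is moreover small on the complex disc of radius `ρ / 4`, because
`Re ((z - s) ^ 2) ≥ ρ ^ 2 / 2` when `‖z‖ < ρ / 4` and `ρ ≤ |s|`.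

The error `f - g|_ℝ` is removed successively on the annuli `n ≤ |t| ≤ n + 1`, by adding to `g` an
entire approximation of the product of the error with a cutoff that vanishes on `|t| ≤ n - 1`. The
error on the annulus `n - 1 ≤ |t| ≤ n` crossed by the cutoff grows by a factor `C n` that depends
only on the cutoff; all these factors are known in advance, so each tolerance `δ n` can be chosen to
absorb the factor `C (n + 1)` of the next step. The corrections sum up locally uniformly on `ℂ`.
-/

open Filter Topology MeasureTheory ProbabilityTheory Metric
open scoped NNReal ContDiff Convolution

section Jet

variable {𝕜 F : Type*} [NontriviallyNormedField 𝕜] [NormedAddCommGroup F] [NormedSpace 𝕜 F]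
  {r : ℕ} {φ ψ : 𝕜 → F} {x : 𝕜}

/-- The `r`-jet `(φ x, φ' x, …, φ⁽ʳ⁾ x)`. As a vector it carries the supremum norm, so `‖jet r φ x‖`
is the largest norm of a derivative of `φ` of order at most `r` at `x`. -/
noncomputable def jet (r : ℕ) (φ : 𝕜 → F) (x : 𝕜) : Fin (r + 1) → F :=
  fun k ↦ iteratedDeriv k φ x

lemma norm_iteratedDeriv_le_norm_jet (φ : 𝕜 → F) (x : 𝕜) {k : ℕ} (hk : k ≤ r) :
    ‖iteratedDeriv k φ x‖ ≤ ‖jet r φ x‖ :=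
  norm_le_pi_norm (jet r φ x) ⟨k, Nat.lt_succ_of_le hk⟩

@[simp]
lemma jet_zero (r : ℕ) (x : 𝕜) : jet r (0 : 𝕜 → F) x = 0 := by
  ext k
  simp [jet]

lemma jet_congr_of_eventuallyEq (h : φ =ᶠ[𝓝 x] ψ) : jet r φ x = jet r ψ x :=
  funext fun k ↦ h.iteratedDeriv_eq k

lemma jet_sub (hφ : ContDiff 𝕜 r φ) (hψ : ContDiff 𝕜 r ψ) (x : 𝕜) :
    jet r (φ - ψ) x = jet r φ x - jet r ψ x := by
  ext k
  have hk : ((k : ℕ) : WithTop ℕ∞) ≤ r := mod_cast Nat.le_of_lt_succ k.is_lt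
  exact iteratedDeriv_sub (hφ.of_le hk).contDiffAt (hψ.of_le hk).contDiffAt

lemma continuous_jet (hφ : ContDiff 𝕜 r φ) : Continuous (jet r φ) :=
  continuous_pi fun k ↦
    hφ.continuous_iteratedDeriv k (mod_cast Nat.le_of_lt_succ k.is_lt)

lemma hasCompactSupport_jet (hφ : HasCompactSupport φ) (r : ℕ) : HasCompactSupport (jet r φ) :=
  .intro hφ.isCompact fun _ hx ↦
    (jet_congr_of_eventuallyEq (notMem_tsupport_iff_eventuallyEq.1 hx)).trans (jet_zero r _)

lemma norm_jet_mul_le {A : Type*} [NormedRing A] [NormedAlgebra 𝕜 A] {φ ψ : 𝕜 → A}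
    (hφ : ContDiff 𝕜 r φ) (hψ : ContDiff 𝕜 r ψ) (x : 𝕜) :
    ‖jet r (φ * ψ) x‖ ≤ 2 ^ r * ‖jet r φ x‖ * ‖jet r ψ x‖ := by
  refine (pi_norm_le_iff_of_nonneg (by positivity)).2 fun k ↦ ?_
  have hkr : (k : ℕ) ≤ r := Nat.le_of_lt_succ k.is_lt
  have leibniz := norm_iteratedFDeriv_mul_le hφ hψ x (n := k) (mod_cast hkr)
  simp only [norm_iteratedFDeriv_eq_norm_iteratedDeriv] at leibniz
  calc ‖iteratedDeriv k (φ * ψ) x‖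
      ≤ ∑ i ∈ Finset.range (k + 1), ((k : ℕ).choose i : ℝ) * ‖iteratedDeriv i φ x‖ *
          ‖iteratedDeriv (k - i) ψ x‖ := leibniz
    _ ≤ ∑ i ∈ Finset.range (k + 1), ((k : ℕ).choose i : ℝ) * ‖jet r φ x‖ * ‖jet r ψ x‖ := by
        gcongr with i hi
        · exact norm_iteratedDeriv_le_norm_jet φ x
            ((Nat.le_of_lt_succ (Finset.mem_range.1 hi)).trans hkr)
        · exact norm_iteratedDeriv_le_norm_jet ψ x ((Nat.sub_le _ _).trans hkr)
    _ = 2 ^ (k : ℕ) * ‖jet r φ x‖ * ‖jet r ψ x‖ := by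
        rw [← Finset.sum_mul, ← Finset.sum_mul, ← Nat.cast_sum, Nat.sum_range_choose]
        push_cast
        rfl
    _ ≤ 2 ^ r * ‖jet r φ x‖ * ‖jet r ψ x‖ := by
        gcongr
        exact one_le_two

end Jet

section Convolution

variable {E : Type*} [NormedAddCommGroup E] [NormedSpace ℝ E]

lemma hasCompactSupport_iteratedDeriv {φ : ℝ → E} (hφ : HasCompactSupport φ) (k : ℕ) :
    HasCompactSupport (iteratedDeriv k φ) := by
  rw [iteratedDeriv_eq_equiv_comp]
  exact (hφ.iteratedFDeriv k).comp_left (map_zero _)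

lemma iteratedDeriv_convolution_right {p : ℝ → ℝ} (hp : LocallyIntegrable p) {k : ℕ} {φ : ℝ → E}
    (hφ : ContDiff ℝ k φ) (hs : HasCompactSupport φ) :
    iteratedDeriv k (p ⋆[.lsmul ℝ ℝ] φ : ℝ → E) = p ⋆[.lsmul ℝ ℝ] iteratedDeriv k φ := by
  induction k generalizing φ with
  | zero => simp
  | succ k ih =>
    have hφ' : deriv (p ⋆[.lsmul ℝ ℝ] φ : ℝ → E) = p ⋆[.lsmul ℝ ℝ] deriv φ := funext fun x ↦
      (hs.hasDerivAt_convolution_right _ hp (hφ.of_le (by norm_cast; omega)) x).deriv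
    have : ContDiff ℝ k (deriv φ) := (contDiff_succ_iff_deriv.1 (mod_cast hφ)).2.2
    rw [iteratedDeriv_succ', iteratedDeriv_succ', hφ', ih this hs.deriv]

lemma jet_convolution_right [CompleteSpace E] {p : ℝ → ℝ} (hp : LocallyIntegrable p) {r : ℕ}
    {φ : ℝ → E} (hφ : ContDiff ℝ r φ) (hs : HasCompactSupport φ) :
    jet r (p ⋆[.lsmul ℝ ℝ] φ : ℝ → E) = p ⋆[.lsmul ℝ ℝ] jet r φ := by
  ext x k
  have hk (i : Fin (r + 1)) : ContDiff ℝ (i : ℕ) φ :=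
    hφ.of_le (mod_cast Nat.le_of_lt_succ i.is_lt)
  have hint (i : Fin (r + 1)) :
      Integrable fun u ↦ (ContinuousLinearMap.lsmul ℝ ℝ (p u) (jet r φ (x - u))) i :=
    (hasCompactSupport_iteratedDeriv hs i).convolutionExists_right (.lsmul ℝ ℝ) hp
      ((hk i).continuous_iteratedDeriv' i) x
  rw [convolution_def, eval_integral hint]
  exact congr_fun (iteratedDeriv_convolution_right hp (hk k) hs) x

lemma exists_norm_integral_comp_sub_sub_le {X : Type*} [NormedAddCommGroup X] [MeasurableSpace X]
    [BorelSpace X] [SecondCountableTopology X] [CompleteSpace E] {ψ : X → E}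
    (hψ : UniformContinuous ψ) {B : ℝ} (hB : ∀ x, ‖ψ x‖ ≤ B) {δ : ℝ} (hδ : 0 < δ) :
    ∃ C, ∀ (μ : Measure X) [IsProbabilityMeasure μ], Integrable (fun u ↦ ‖u‖ ^ 2) μ →
      ∀ x, ‖∫ u, ψ (x - u) ∂μ - ψ x‖ ≤ δ + C * ∫ u, ‖u‖ ^ 2 ∂μ := by
  obtain ⟨η, hη, hψη⟩ := Metric.uniformContinuous_iff.1 hψ δ hδ
  have hB0 : 0 ≤ B := (norm_nonneg _).trans (hB 0)
  refine ⟨2 * B / η ^ 2, fun μ _ hμ x ↦ ?_⟩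
  have hpt (u : X) : ‖ψ (x - u) - ψ x‖ ≤ δ + 2 * B / η ^ 2 * ‖u‖ ^ 2 := by
    rcases lt_or_ge ‖u‖ η with hu | hu
    · have near : dist (ψ (x - u)) (ψ x) < δ := hψη (by simpa [dist_eq_norm] using hu)
      rw [dist_eq_norm] at near
      exact near.le.trans (le_add_of_nonneg_right (by positivity))
    · calc ‖ψ (x - u) - ψ x‖ ≤ 2 * B := by
            linarith [norm_sub_le (ψ (x - u)) (ψ x), hB (x - u), hB x]
        _ ≤ 2 * B / η ^ 2 * ‖u‖ ^ 2 := by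
            rw [div_mul_eq_mul_div, le_div_iff₀ (by positivity)]
            gcongr
        _ ≤ δ + 2 * B / η ^ 2 * ‖u‖ ^ 2 := le_add_of_nonneg_left hδ.le
  have hint : Integrable (fun u ↦ ψ (x - u)) μ :=
    .of_bound (hψ.continuous.comp (by fun_prop)).aestronglyMeasurable B (ae_of_all _ fun u ↦ hB _)
  calc ‖∫ u, ψ (x - u) ∂μ - ψ x‖ = ‖∫ u, (ψ (x - u) - ψ x) ∂μ‖ := by
        rw [integral_sub hint (integrable_const _)]
        simp
    _ ≤ ∫ u, (δ + 2 * B / η ^ 2 * ‖u‖ ^ 2) ∂μ :=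
        norm_integral_le_of_norm_le ((integrable_const _).add (hμ.const_mul _)) (ae_of_all _ hpt)
    _ = δ + 2 * B / η ^ 2 * ∫ u, ‖u‖ ^ 2 ∂μ := by
        rw [integral_add (integrable_const _) (hμ.const_mul _), integral_const_mul]
        simp

lemma tendstoUniformly_integral_comp_sub_gaussianReal [CompleteSpace E] {ψ : ℝ → E}
    (hψ : UniformContinuous ψ) {B : ℝ} (hB : ∀ x, ‖ψ x‖ ≤ B) :
    TendstoUniformly (fun (v : ℝ≥0) x ↦ ∫ u, ψ (x - u) ∂gaussianReal 0 v) ψ (𝓝 0) := by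
  rw [Metric.tendstoUniformly_iff]
  intro δ hδ
  obtain ⟨C, hC⟩ := exists_norm_integral_comp_sub_sub_le hψ hB (half_pos hδ)
  have hlim : Tendsto (fun v : ℝ≥0 ↦ C * (v : ℝ)) (𝓝 0) (𝓝 0) :=
    Continuous.tendsto' (by fun_prop) _ _ (by simp)
  filter_upwards [hlim.eventually_lt_const (half_pos hδ)] with v hv x
  have hsq : Integrable (fun u : ℝ ↦ ‖u‖ ^ 2) (gaussianReal 0 v) :=
    (memLp_id_gaussianReal (μ := 0) (v := v) 2).integrable_norm_pow two_ne_zero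
  have hvar : ∫ u : ℝ, ‖u‖ ^ 2 ∂gaussianReal 0 v = v := by
    rw [← variance_id_gaussianReal (μ := 0), variance_of_integral_eq_zero (by fun_prop) (by simp)]
    simp
  have := hC _ hsq x
  rw [hvar] at this
  rw [dist_comm, dist_eq_norm]
  linarith

end Convolution

section GaussianSmoothing

lemma differentiable_integral_smul_comp_sub_ofReal {E : Type*} [NormedAddCommGroup E]
    [NormedSpace ℂ E] {φ : ℝ → ℝ} (hφ : Integrable φ) (hs : HasCompactSupport φ)
    {K : ℂ → E} (hK : ContDiff ℂ 1 K) : Differentiable ℂ fun z ↦ ∫ s, φ s • K (z - s) := by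
  intro z₀
  have hcK : Continuous fun p : ℂ × ℝ ↦ K (p.1 - p.2) := hK.continuous.comp (by fun_prop)
  have hcK' : Continuous fun p : ℂ × ℝ ↦ deriv K (p.1 - p.2) :=
    (hK.continuous_deriv le_rfl).comp (by fun_prop)
  obtain ⟨M, hM⟩ := ((isCompact_closedBall z₀ 1).prod hs).exists_bound_of_continuousOn
    hcK'.continuousOn
  have hint : Integrable fun s ↦ φ s • K (z₀ - s) :=
    (integrableOn_iff_integrable_of_support_subset
      ((Function.support_smul_subset_left _ _).trans (subset_tsupport φ))).1
      (hφ.integrableOn.smul_continuousOn (hcK.comp (.prodMk_right z₀)).continuousOn hs.isCompact)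
  refine (hasDerivAt_integral_of_dominated_loc_of_deriv_le
    (F' := fun z s ↦ φ s • deriv K (z - s)) (bound := fun s ↦ ‖φ s‖ * M)
    (closedBall_mem_nhds z₀ one_pos) (Eventually.of_forall fun z ↦ ?_) hint ?_
    (ae_of_all _ fun s z hz ↦ ?_) (hφ.norm.mul_const M)
    (ae_of_all _ fun s z _ ↦ ?_)).2.differentiableAt
  · exact hφ.aestronglyMeasurable.smul (hcK.comp (.prodMk_right z)).aestronglyMeasurable
  · exact hφ.aestronglyMeasurable.smul (hcK'.comp (.prodMk_right z₀)).aestronglyMeasurable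
  · by_cases hsφ : φ s = 0
    · simp [hsφ]
    · rw [norm_smul]
      gcongr
      exact hM (z, s) ⟨hz, subset_tsupport _ hsφ⟩
  · exact (((hK.differentiable one_ne_zero) (z - s)).hasDerivAt.comp_sub_const z (s : ℂ)).const_smul
      (φ s)

/-- The entire extension of the density `gaussianPDFReal 0 v` of the centred Gaussian law of
variance `v`. -/
noncomputable def gaussianKernel (v : ℝ≥0) (w : ℂ) : ℂ :=
  ((√(2 * Real.pi * v))⁻¹ : ℝ) * Complex.exp (-w ^ 2 / (2 * v))

lemma gaussianKernel_ofReal (v : ℝ≥0) (x : ℝ) :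
    gaussianKernel v x = (gaussianPDFReal 0 v x : ℂ) := by
  simp [gaussianKernel, gaussianPDFReal]

lemma norm_gaussianKernel_le (v : ℝ≥0) {w : ℂ} {c : ℝ} (hc : 0 < c) (hw : c ≤ (w ^ 2).re) :
    ‖gaussianKernel v w‖ ≤ 2 * √v / c := by
  rcases eq_or_ne v 0 with rfl | hv
  · simp [gaussianKernel]
  have hv0 : (0 : ℝ) < v := by positivity
  have hre : (-w ^ 2 / (2 * (v : ℂ))).re = -((w ^ 2).re / (2 * v)) := by
    rw [show (2 * (v : ℂ)) = ((2 * v : ℝ) : ℂ) by simp, Complex.div_ofReal_re, Complex.neg_re,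
      neg_div]
  have hexp : ‖Complex.exp (-w ^ 2 / (2 * v))‖ ≤ 2 * v / c := by
    rw [Complex.norm_exp, hre, Real.exp_neg]
    refine inv_le_of_inv_le₀ (by positivity) ?_
    calc (2 * v / c)⁻¹ = c / (2 * v) := inv_div _ _
      _ ≤ (w ^ 2).re / (2 * v) := by gcongr
      _ ≤ Real.exp ((w ^ 2).re / (2 * v)) := (lt_add_one _).le.trans (Real.add_one_le_exp _)
  have hcst : (√(2 * Real.pi * v))⁻¹ ≤ (√v)⁻¹ := by
    gcongr
    nlinarith [Real.pi_gt_three]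
  calc ‖gaussianKernel v w‖ = (√(2 * Real.pi * v))⁻¹ * ‖Complex.exp (-w ^ 2 / (2 * v))‖ := by
        rw [gaussianKernel, norm_mul, Complex.norm_of_nonneg (by positivity)]
    _ ≤ (√v)⁻¹ * (2 * v / c) := by gcongr
    _ = 2 * √v / c := by
        field_simp
        rw [Real.sq_sqrt hv0.le]

/-- The entire extension of the convolution of `φ` with the centred Gaussian law of variance `v`. -/
noncomputable def gaussianSmoothing (v : ℝ≥0) (φ : ℝ → ℝ) (z : ℂ) : ℂ :=
  ∫ s, φ s • gaussianKernel v (z - s)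

lemma differentiable_gaussianSmoothing (v : ℝ≥0) {φ : ℝ → ℝ} (hφ : Integrable φ)
    (hs : HasCompactSupport φ) : Differentiable ℂ (gaussianSmoothing v φ) :=
  differentiable_integral_smul_comp_sub_ofReal hφ hs (by unfold gaussianKernel; fun_prop)

lemma gaussianSmoothing_ofReal (v : ℝ≥0) (φ : ℝ → ℝ) (x : ℝ) :
    gaussianSmoothing v φ x = ((gaussianPDFReal 0 v ⋆[.lsmul ℝ ℝ] φ : ℝ → ℝ) x : ℂ) := by
  rw [convolution_lsmul_swap, ← integral_complex_ofReal]
  refine integral_congr_ae (ae_of_all _ fun s ↦ ?_)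
  simp only [← Complex.ofReal_sub, gaussianKernel_ofReal, Complex.real_smul, smul_eq_mul,
    Complex.ofReal_mul, mul_comm]

lemma half_sq_le_re_sub_ofReal_sq {ρ s : ℝ} {z : ℂ} (hz : ‖z‖ < ρ / 4) (hs : ρ ≤ |s|) :
    ρ ^ 2 / 2 ≤ ((z - s) ^ 2).re := by
  have hre : 3 * ρ / 4 ≤ |z.re - s| := by
    have := abs_sub_abs_le_abs_sub s z.re
    rw [abs_sub_comm] at this
    linarith [Complex.abs_re_le_norm z]
  have hre_sq : (3 * ρ / 4) ^ 2 ≤ (z.re - s) ^ 2 :=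
    sq_le_sq' (by linarith [norm_nonneg z, abs_nonneg (z.re - s)]) hre |>.trans_eq (sq_abs _)
  have him_sq : z.im ^ 2 ≤ (ρ / 4) ^ 2 :=
    sq_le_sq.2 (((Complex.abs_im_le_norm z).trans hz.le).trans (le_abs_self _))
  have expand : ((z - s) ^ 2).re = (z.re - s) ^ 2 - z.im ^ 2 := by simp [sq]
  rw [expand]
  linarith

lemma norm_gaussianSmoothing_le (v : ℝ≥0) {φ : ℝ → ℝ} (hφ : Integrable φ) {ρ : ℝ}
    (hρ : ∀ s, |s| < ρ → φ s = 0) {z : ℂ} (hz : ‖z‖ < ρ / 4) :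
    ‖gaussianSmoothing v φ z‖ ≤ (∫ s, ‖φ s‖) * (2 * √v / (ρ ^ 2 / 2)) := by
  have hρ0 : 0 < ρ := by linarith [norm_nonneg z]
  rw [← integral_mul_const]
  refine norm_integral_le_of_norm_le (hφ.norm.mul_const _) (ae_of_all _ fun s ↦ ?_)
  rw [norm_smul]
  by_cases hs : φ s = 0
  · simp [hs]
  gcongr
  exact norm_gaussianKernel_le v (by positivity)
    (half_sq_le_re_sub_ofReal_sq hz (not_lt.1 fun h ↦ hs (hρ s h)))

lemma tendstoUniformly_jet_convolution_gaussianPDFReal {r : ℕ} {φ : ℝ → ℝ} (hφ : ContDiff ℝ r φ)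
    (hs : HasCompactSupport φ) :
    TendstoUniformly (fun (v : ℝ≥0) ↦ jet r (gaussianPDFReal 0 v ⋆[.lsmul ℝ ℝ] φ : ℝ → ℝ))
      (jet r φ) (𝓝[>] 0) := by
  have hc : HasCompactSupport (jet r φ) := hasCompactSupport_jet hs r
  obtain ⟨B, hB⟩ := hc.exists_bound_of_continuous (continuous_jet hφ)
  have hlim : TendstoUniformly (fun (v : ℝ≥0) x ↦ ∫ u, jet r φ (x - u) ∂gaussianReal 0 v)
      (jet r φ) (𝓝[>] 0) := fun U hU ↦
    nhdsWithin_le_nhds (tendstoUniformly_integral_comp_sub_gaussianReal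
      (hc.uniformContinuous_of_continuous (continuous_jet hφ)) hB U hU)
  refine (tendstoUniformly_congr ?_).1 hlim
  filter_upwards [self_mem_nhdsWithin] with v hv
  ext1 x
  rw [jet_convolution_right (integrable_gaussianPDFReal 0 v).locallyIntegrable hφ hs,
    convolution_lsmul]
  exact integral_gaussianReal_eq_integral_smul (ne_of_gt (Set.mem_Ioi.1 hv))

end GaussianSmoothing

section RealEntire

/-- Entire functions taking real values on the real axis. -/
structure IsRealEntire (g : ℂ → ℂ) : Prop where
  differentiable : Differentiable ℂ g
  im_ofReal : ∀ t : ℝ, (g t).im = 0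

/-- The real part of `g` along the real axis, which is `g|_ℝ` when `g` satisfies `IsRealEntire`. -/
def restrictReal (g : ℂ → ℂ) : ℝ → ℝ :=
  fun t ↦ (g t).re

lemma isRealEntire_zero : IsRealEntire 0 :=
  ⟨differentiable_const 0, fun _ ↦ rfl⟩

lemma IsRealEntire.add {g h : ℂ → ℂ} (hg : IsRealEntire g) (hh : IsRealEntire h) :
    IsRealEntire (g + h) :=
  ⟨hg.differentiable.add hh.differentiable, fun t ↦ by simp [hg.im_ofReal, hh.im_ofReal]⟩

lemma contDiff_restrictReal {g : ℂ → ℂ} (hg : Differentiable ℂ g) (n : WithTop ℕ∞) :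
    ContDiff ℝ n (restrictReal g) :=
  hg.contDiff.real_of_complex

lemma iteratedDeriv_restrictReal {g : ℂ → ℂ} (hg : Differentiable ℂ g) (k : ℕ) :
    iteratedDeriv k (restrictReal g) = restrictReal (iteratedDeriv k g) := by
  induction k generalizing g with
  | zero => simp
  | succ k ih =>
    have hderiv : deriv (restrictReal g) = restrictReal (deriv g) :=
      funext fun t ↦ (hg t).hasDerivAt.real_of_complex.deriv
    rw [iteratedDeriv_succ', iteratedDeriv_succ', hderiv,
      ih (differentiableOn_univ.1 (hg.differentiableOn.deriv isOpen_univ))]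

lemma tendstoLocallyUniformlyOn_iteratedDeriv {ι E : Type*} [NormedAddCommGroup E]
    [NormedSpace ℂ E] [CompleteSpace E] {l : Filter ι} {F : ι → ℂ → E} {g : ℂ → E} {U : Set ℂ}
    (h : TendstoLocallyUniformlyOn F g l U) (hF : ∀ i, DifferentiableOn ℂ (F i) U)
    (hU : IsOpen U) (k : ℕ) :
    TendstoLocallyUniformlyOn (fun i ↦ iteratedDeriv k (F i)) (iteratedDeriv k g) l U := by
  induction k generalizing F g with
  | zero => simpa using h
  | succ k ih =>
    simp only [iteratedDeriv_succ']
    exact ih (h.deriv (.of_forall hF) hU) fun i ↦ (hF i).deriv hU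

section Limit

variable {ι : Type*} {l : Filter ι} {G : ι → ℂ → ℂ} {g : ℂ → ℂ}

lemma IsRealEntire.of_tendstoLocallyUniformly [l.NeBot] (h : TendstoLocallyUniformly G g l)
    (hG : ∀ i, IsRealEntire (G i)) : IsRealEntire g where
  differentiable := differentiableOn_univ.1 <|
    (tendstoLocallyUniformlyOn_univ.2 h).differentiableOn
      (.of_forall fun i ↦ (hG i).differentiable.differentiableOn) isOpen_univ
  im_ofReal t := by
    have him : Tendsto (fun i ↦ (G i t).im) l (𝓝 (g t).im) :=
      (Complex.continuous_im.tendsto _).comp <|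
        (tendstoLocallyUniformlyOn_univ.2 h).tendsto_at (Set.mem_univ _)
    simp only [(hG _).im_ofReal] at him
    exact tendsto_nhds_unique him tendsto_const_nhds

lemma tendsto_jet_restrictReal (h : TendstoLocallyUniformly G g l) (hG : ∀ i, IsRealEntire (G i))
    (hg : IsRealEntire g) (r : ℕ) (t : ℝ) :
    Tendsto (fun i ↦ jet r (restrictReal (G i)) t) l (𝓝 (jet r (restrictReal g) t)) := by
  refine tendsto_pi_nhds.2 fun k ↦ ?_
  simp only [jet, iteratedDeriv_restrictReal hg.differentiable,
    iteratedDeriv_restrictReal (hG _).differentiable]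
  exact (Complex.continuous_re.tendsto _).comp <|
    (tendstoLocallyUniformlyOn_iteratedDeriv (tendstoLocallyUniformlyOn_univ.2 h)
      (fun i ↦ (hG i).differentiable.differentiableOn) isOpen_univ k).tendsto_at (Set.mem_univ _)

end Limit

lemma exists_tendstoLocallyUniformly_of_norm_sub_le {E F : Type*} [SeminormedAddCommGroup E]
    [NormedAddCommGroup F] [CompleteSpace F] {G : ℕ → E → F} {R u : ℕ → ℝ}
    (hR : Tendsto R atTop atTop) (hu : Summable u)
    (hG : ∀ n z, ‖z‖ < R n → ‖G (n + 1) z - G n z‖ ≤ u n) :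
    ∃ g, TendstoLocallyUniformly G g atTop := by
  refine ⟨fun z ↦ G 0 z + ∑' n, (G (n + 1) z - G n z), fun U hU z₀ ↦
    ⟨ball 0 (‖z₀‖ + 1), isOpen_ball.mem_nhds (by simp), ?_⟩⟩
  have hev : ∀ᶠ n in atTop, ∀ z ∈ ball (0 : E) (‖z₀‖ + 1), ‖G (n + 1) z - G n z‖ ≤ u n := by
    filter_upwards [hR.eventually_ge_atTop (‖z₀‖ + 1)] with n hn z hz
    exact hG n z ((mem_ball_zero_iff.1 hz).trans_le hn)
  suffices TendstoUniformlyOn G (fun z ↦ G 0 z + ∑' n, (G (n + 1) z - G n z)) atTop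
      (ball 0 (‖z₀‖ + 1)) from this U hU
  have hsum := tendstoUniformlyOn_tsum_nat_eventually hu hev
  have telescope (N : ℕ) (z : E) : ∑ n ∈ Finset.range N, (G (n + 1) z - G n z) = G N z - G 0 z :=
    Finset.sum_range_sub (fun n ↦ G n z) N
  simp only [telescope, Metric.tendstoUniformlyOn_iff, dist_eq_norm, sub_sub_eq_add_sub] at hsum
  simpa only [Metric.tendstoUniformlyOn_iff, dist_eq_norm, add_comm (G 0 _)] using hsum

end RealEntire

section Correction

lemma exists_isRealEntire_norm_jet_sub_le {r : ℕ} {φ : ℝ → ℝ} (hφ : ContDiff ℝ r φ)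
    (hs : HasCompactSupport φ) {ρ : ℝ} (hρ : ∀ s, |s| < ρ → φ s = 0) {δ : ℝ} (hδ : 0 < δ) :
    ∃ g, IsRealEntire g ∧ (∀ t, ‖jet r φ t - jet r (restrictReal g) t‖ ≤ δ) ∧
      ∀ z, ‖z‖ < ρ / 4 → ‖g z‖ ≤ δ := by
  have hint : Integrable φ := hφ.continuous.integrable_of_hasCompactSupport hs
  have hsmall : Tendsto (fun v : ℝ≥0 ↦ (∫ s, ‖φ s‖) * (2 * √v / (ρ ^ 2 / 2))) (𝓝[>] 0) (𝓝 0) :=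
    (Continuous.tendsto' (by fun_prop) _ _ (by simp)).mono_left nhdsWithin_le_nhds
  obtain ⟨v, hjet, hv⟩ := ((Metric.tendstoUniformly_iff.1
    (tendstoUniformly_jet_convolution_gaussianPDFReal hφ hs) δ hδ).and
    (hsmall.eventually_le_const hδ)).exists
  have hrestrict : restrictReal (gaussianSmoothing v φ) = gaussianPDFReal 0 v ⋆[.lsmul ℝ ℝ] φ :=
    funext fun t ↦ by rw [restrictReal, gaussianSmoothing_ofReal, Complex.ofReal_re]
  refine ⟨gaussianSmoothing v φ, ⟨differentiable_gaussianSmoothing v hint hs, fun t ↦ ?_⟩,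
    fun t ↦ ?_, fun z hz ↦ (norm_gaussianSmoothing_le v hint hρ hz).trans hv⟩
  · rw [gaussianSmoothing_ofReal, Complex.ofReal_im]
  · rw [hrestrict, ← dist_eq_norm]
    exact (hjet t).le

lemma exists_contDiff_eventuallyEq_zero_eventuallyEq_one {E : Type*} [NormedAddCommGroup E]
    [NormedSpace ℝ E] [FiniteDimensional ℝ E] {s k : Set E} (hs : IsClosed s) (hk : IsCompact k)
    (hsk : Disjoint s k) :
    ∃ χ : E → ℝ, ContDiff ℝ ∞ χ ∧ HasCompactSupport χ ∧ (∀ x ∈ s, χ =ᶠ[𝓝 x] 0) ∧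
      ∀ x ∈ k, χ =ᶠ[𝓝 x] 1 := by
  obtain ⟨L, hL, hkL⟩ := exists_compact_superset hk
  have hdisj : Disjoint (s ∪ (interior L)ᶜ) k :=
    hsk.union_left (Set.disjoint_compl_left_iff_subset.2 hkL)
  obtain ⟨χ, hχ0, hχ1, -⟩ := exists_contMDiffMap_zero_one_nhds_of_isClosed (n := ⊤)
    (modelWithCornersSelf ℝ E) (hs.union isOpen_interior.isClosed_compl) hk.isClosed hdisj
  rw [eventually_nhdsSet_iff_forall] at hχ0 hχ1
  exact ⟨χ, χ.contMDiff.contDiff,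
    .intro hL fun x hx ↦ (hχ0 x (.inr fun h ↦ hx (interior_subset h))).self_of_nhds,
    fun x hx ↦ hχ0 x (.inl hx), hχ1⟩

/-- `G'` corrects the approximation `G` of `f`: it gains accuracy `δ` on the annulus
`σ ≤ |t| ≤ τ`, at the price of a change by at most `δ` on `|t| ≤ ρ` and on the complex disc of
radius `ρ / 4`, and of a growth of the error by at most the factor `C` (up to `δ`) everywhere. -/
structure IsCorrection (r : ℕ) (f : ℝ → ℝ) (ρ σ τ C δ : ℝ) (G G' : ℂ → ℂ) : Prop where
  norm_sub_le : ∀ z, ‖z‖ < ρ / 4 → ‖G' z - G z‖ ≤ δ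
  inner_le : ∀ t, |t| ≤ ρ →
    ‖jet r (f - restrictReal G') t‖ ≤ ‖jet r (f - restrictReal G) t‖ + δ
  le_mul_add : ∀ t, ‖jet r (f - restrictReal G') t‖ ≤ C * ‖jet r (f - restrictReal G) t‖ + δ
  annulus_le : ∀ t, σ ≤ |t| → |t| ≤ τ → ‖jet r (f - restrictReal G') t‖ ≤ δ

lemma isCorrection_of_cutoff {r : ℕ} {f χ : ℝ → ℝ} {ρ σ τ B δ : ℝ} {G g : ℂ → ℂ}
    (hf : ContDiff ℝ r f) (hχ : ContDiff ℝ r χ) (hχ0 : ∀ t, |t| ≤ ρ → χ =ᶠ[𝓝 t] 0)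
    (hχ1 : ∀ t, σ ≤ |t| → |t| ≤ τ → χ =ᶠ[𝓝 t] 1) (hB : ∀ t, ‖jet r χ t‖ ≤ B)
    (hG : Differentiable ℂ G) (hg : Differentiable ℂ g)
    (hjet : ∀ t, ‖jet r (χ * (f - restrictReal G)) t - jet r (restrictReal g) t‖ ≤ δ)
    (hsmall : ∀ z, ‖z‖ < ρ / 4 → ‖g z‖ ≤ δ) :
    IsCorrection r f ρ σ τ (1 + 2 ^ r * B) δ G (G + g) := by
  set h : ℝ → ℝ := f - restrictReal G with hh
  have hhC : ContDiff ℝ r h := hf.sub (contDiff_restrictReal hG r)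
  have herr (t : ℝ) :
      ‖jet r (f - restrictReal (G + g)) t‖ ≤ ‖jet r h t - jet r (χ * h) t‖ + δ := by
    have hsplit : f - restrictReal (G + g) = h - restrictReal g := by
      ext s
      simp [hh, restrictReal, sub_sub]
    rw [hsplit, jet_sub hhC (contDiff_restrictReal hg r)]
    exact (norm_sub_le_norm_sub_add_norm_sub _ _ _).trans (by gcongr; exact hjet t)
  refine ⟨fun z hz ↦ by simpa using hsmall z hz, fun t ht ↦ ?_, fun t ↦ ?_, fun t ht ht' ↦ ?_⟩
  · have : jet r (χ * h) t = 0 :=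
      (jet_congr_of_eventuallyEq ((hχ0 t ht).mul .rfl)).trans (by simp)
    simpa [this] using herr t
  · calc ‖jet r (f - restrictReal (G + g)) t‖
        ≤ ‖jet r h t - jet r (χ * h) t‖ + δ := herr t
      _ ≤ ‖jet r h t‖ + 2 ^ r * B * ‖jet r h t‖ + δ := by
          gcongr
          refine (norm_sub_le _ _).trans ?_
          gcongr
          refine (norm_jet_mul_le hχ hhC t).trans ?_
          gcongr
          exact hB t
      _ = (1 + 2 ^ r * B) * ‖jet r h t‖ + δ := by ring
  · have : jet r (χ * h) t = jet r h t :=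
      jet_congr_of_eventuallyEq (((hχ1 t ht ht').mul .rfl).trans (by simp))
    simpa [this] using herr t

lemma exists_isCorrection {r : ℕ} {f : ℝ → ℝ} (hf : ContDiff ℝ r f) {ρ σ : ℝ} (hρσ : ρ < σ)
    (τ : ℝ) :
    ∃ C ≥ 1, ∀ G, IsRealEntire G → ∀ δ > 0,
      ∃ G', IsRealEntire G' ∧ IsCorrection r f ρ σ τ C δ G G' := by
  obtain ⟨χ, hχ, hχs, hχ0, hχ1⟩ := exists_contDiff_eventuallyEq_zero_eventuallyEq_one
    (s := {t : ℝ | |t| ≤ ρ}) (k := closedBall 0 τ ∩ {t : ℝ | σ ≤ |t|})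
    (isClosed_le continuous_abs continuous_const)
    ((isCompact_closedBall 0 τ).inter_right (isClosed_le continuous_const continuous_abs))
    (Set.disjoint_left.2 fun t ht ht' ↦ (ht.trans_lt hρσ).not_ge ht'.2)
  have hχr : ContDiff ℝ r χ := hχ.of_le (mod_cast le_top)
  obtain ⟨B, hB⟩ := (hasCompactSupport_jet hχs r).exists_bound_of_continuous (continuous_jet hχr)
  have hB0 : 0 ≤ B := (norm_nonneg _).trans (hB 0)
  refine ⟨1 + 2 ^ r * B, by simp only [ge_iff_le, le_add_iff_nonneg_right]; positivity,
    fun G hG δ hδ ↦ ?_⟩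
  have hsupp (t : ℝ) (ht : |t| < ρ) : (χ * (f - restrictReal G)) t = 0 := by
    simp [(hχ0 t ht.le).self_of_nhds]
  obtain ⟨g, hg, hjet, hsmall⟩ := exists_isRealEntire_norm_jet_sub_le
    (hχr.mul (hf.sub (contDiff_restrictReal hG.differentiable r))) hχs.mul_right hsupp hδ
  exact ⟨G + g, hG.add hg, isCorrection_of_cutoff hf hχr hχ0
    (fun t ht ht' ↦ hχ1 t ⟨by simpa using ht', ht⟩) hB hG.differentiable hg.differentiable
    hjet hsmall⟩

lemma exists_seq_isCorrection {r : ℕ} {f : ℝ → ℝ} (hf : ContDiff ℝ r f) :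
    ∃ C : ℕ → ℝ, (∀ n, 1 ≤ C n) ∧ ∀ δ : ℕ → ℝ, (∀ n, 0 < δ n) →
      ∃ G : ℕ → ℂ → ℂ, ∀ n, IsRealEntire (G n) ∧
        IsCorrection r f (n - 1) n (n + 1) (C n) (δ n) (G n) (G (n + 1)) := by
  choose C hC hcorr using fun n : ℕ ↦ exists_isCorrection hf (sub_one_lt (n : ℝ)) (n + 1)
  refine ⟨C, hC, fun δ hδ ↦ ?_⟩
  choose! next hnext hstep using fun n G hG ↦ hcorr n G hG (δ n) (hδ n)
  have hG (n : ℕ) : IsRealEntire (n.rec 0 next) := by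
    induction n with
    | zero => exact isRealEntire_zero
    | succ n ih => exact hnext n _ ih
  exact ⟨fun n ↦ n.rec 0 next, fun n ↦ ⟨hG n, hstep n _ (hG n)⟩⟩

lemma norm_jet_le_of_isCorrection {r : ℕ} {f : ℝ → ℝ} {C δ : ℕ → ℝ} {G : ℕ → ℂ → ℂ}
    (hC : ∀ n, 1 ≤ C n)
    (hG : ∀ n : ℕ, IsCorrection r f (n - 1) n (n + 1) (C n) (δ n) (G n) (G (n + 1)))
    {t e : ℝ} (he : ∀ n, ⌊|t|⌋₊ ≤ n → C (n + 1) * δ n ≤ e * (1 / 2) ^ (n + 1))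
    {n : ℕ} (hn : ⌊|t|⌋₊ + 2 ≤ n) :
    ‖jet r (f - restrictReal (G n)) t‖ ≤ e * (1 - (1 / 2) ^ n) := by
  set N := ⌊|t|⌋₊
  have hδ (n : ℕ) : 0 ≤ δ n :=
    (norm_nonneg _).trans ((hG n).annulus_le n (le_abs_self _) (by simp))
  have hδe (n : ℕ) (hn : N ≤ n) : δ n ≤ e * (1 / 2) ^ (n + 1) :=
    (le_mul_of_one_le_left (hδ n) (hC _)).trans (he n hn)
  have htN : |t| < N + 1 := Nat.lt_floor_add_one _
  induction n, hn using Nat.le_induction with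
  | base =>
    have hN : ‖jet r (f - restrictReal (G (N + 1))) t‖ ≤ δ N :=
      (hG N).annulus_le t (Nat.floor_le (abs_nonneg t)) htN.le
    have he0 : 0 ≤ e :=
      nonneg_of_mul_nonneg_left ((hδ N).trans (hδe N le_rfl)) (by positivity)
    calc ‖jet r (f - restrictReal (G (N + 2))) t‖
        ≤ C (N + 1) * ‖jet r (f - restrictReal (G (N + 1))) t‖ + δ (N + 1) :=
          (hG (N + 1)).le_mul_add t
      _ ≤ C (N + 1) * δ N + δ (N + 1) := by
          have := zero_le_one.trans (hC (N + 1))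
          gcongr
      _ ≤ e * (1 / 2) ^ (N + 1) + e * (1 / 2) ^ (N + 2) :=
          add_le_add (he N le_rfl) (hδe (N + 1) N.le_succ)
      _ ≤ e * (1 - (1 / 2) ^ (N + 2)) := by
          rw [← mul_add]
          gcongr
          have : (1 / 2 : ℝ) ^ N ≤ 1 := pow_le_one₀ (by norm_num) (by norm_num)
          linarith [pow_succ (1 / 2 : ℝ) N, pow_succ (1 / 2 : ℝ) (N + 1)]
  | succ n hn ih =>
    have hnN : (N : ℝ) + 2 ≤ n := mod_cast hn
    calc ‖jet r (f - restrictReal (G (n + 1))) t‖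
        ≤ ‖jet r (f - restrictReal (G n)) t‖ + δ n := (hG n).inner_le t (by linarith)
      _ ≤ e * (1 - (1 / 2) ^ n) + e * (1 / 2) ^ (n + 1) := add_le_add ih (hδe n (by omega))
      _ = e * (1 - (1 / 2) ^ (n + 1)) := by ring

lemma exists_isRealEntire_tendsto_of_isCorrection {r : ℕ} {f : ℝ → ℝ} (hf : ContDiff ℝ r f)
    {C δ : ℕ → ℝ} {G : ℕ → ℂ → ℂ} (hGe : ∀ n, IsRealEntire (G n))
    (hG : ∀ n : ℕ, IsCorrection r f (n - 1) n (n + 1) (C n) (δ n) (G n) (G (n + 1)))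
    (hδ : Summable δ) :
    ∃ g, IsRealEntire g ∧ ∀ t, Tendsto (fun n ↦ jet r (f - restrictReal (G n)) t) atTop
      (𝓝 (jet r (f - restrictReal g) t)) := by
  have hR : Tendsto (fun n : ℕ ↦ ((n : ℝ) - 1) / 4) atTop atTop :=
    (tendsto_atTop_add_const_right _ (-1) tendsto_natCast_atTop_atTop).atTop_div_const (by norm_num)
  obtain ⟨g, hg⟩ :=
    exists_tendstoLocallyUniformly_of_norm_sub_le hR hδ fun n ↦ (hG n).norm_sub_le
  have hge : IsRealEntire g := .of_tendstoLocallyUniformly hg hGe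
  refine ⟨g, hge, fun t ↦ ?_⟩
  simp only [jet_sub hf (contDiff_restrictReal hge.differentiable r),
    jet_sub hf (contDiff_restrictReal (hGe _).differentiable r)]
  exact tendsto_const_nhds.sub (tendsto_jet_restrictReal hg hGe hge r t)

lemma exists_pos_summable_le {ι : Type*} [Countable ι] {u : ι → ℝ} (hu : ∀ i, 0 < u i) :
    ∃ δ : ι → ℝ, (∀ i, 0 < δ i) ∧ Summable δ ∧ ∀ i, δ i ≤ u i := by
  have := Encodable.ofCountable ι
  obtain ⟨w, hw, _, hsum, -⟩ := posSumOfEncodable one_pos ι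
  exact ⟨fun i ↦ min (w i) (u i), fun i ↦ lt_min (hw i) (hu i),
    hsum.summable.of_nonneg_of_le (fun i ↦ (lt_min (hw i) (hu i)).le) fun i ↦ min_le_left _ _,
    fun i ↦ min_le_right _ _⟩

end Correction

theorem carleman_kaplan_hoischen_general (r : ℕ) (f : ℝ → ℝ) (hf : ContDiff ℝ (r : ℕ∞) f)
    (ε : ℝ → ℝ) (hε : ∀ K, IsCompact K → ∃ e > 0, ∀ t ∈ K, e ≤ ε t) :
    ∃ g : ℂ → ℂ, Differentiable ℂ g ∧ (∀ t : ℝ, (g t).im = 0) ∧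
      ∀ k ≤ r, ∀ t : ℝ, |iteratedDeriv k (fun s : ℝ ↦ f s - (g s).re) t| ≤ ε t := by
  choose e he heε using fun n : ℕ ↦ hε _ (isCompact_closedBall 0 (n + 1))
  obtain ⟨C, hC, hseq⟩ := exists_seq_isCorrection hf
  have hC0 (n : ℕ) : 0 < C n := one_pos.trans_le (hC n)
  have htol (n : ℕ) : 0 < e n * (1 / 2) ^ (n + 1) / C (n + 1) :=
    div_pos (mul_pos (he n) (by positivity)) (hC0 _)
  obtain ⟨δ, hδ, hδsum, hδe⟩ := exists_pos_summable_le htol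
  obtain ⟨G, hG⟩ := hseq δ hδ
  obtain ⟨g, hg, hlim⟩ := exists_isRealEntire_tendsto_of_isCorrection hf (fun n ↦ (hG n).1)
    (fun n ↦ (hG n).2) hδsum
  refine ⟨g, hg.differentiable, hg.im_ofReal, fun k hk t ↦
    (norm_iteratedDeriv_le_norm_jet _ t hk).trans (le_of_tendsto (hlim t).norm ?_)⟩
  filter_upwards [eventually_ge_atTop (⌊|t|⌋₊ + 2)] with n hn
  have heεt (m : ℕ) (hm : ⌊|t|⌋₊ ≤ m) : e m ≤ ε t :=
    heε m t (by simpa using ((Nat.floor_lt (abs_nonneg t)).1 (Nat.lt_succ_of_le hm)).le)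
  have hCδ (m : ℕ) (hm : ⌊|t|⌋₊ ≤ m) : C (m + 1) * δ m ≤ ε t * (1 / 2) ^ (m + 1) :=
    ((le_div_iff₀' (hC0 _)).1 (hδe m)).trans (by gcongr; exact heεt m hm)
  exact (norm_jet_le_of_isCorrection hC (fun n ↦ (hG n).2) hCδ hn).trans
    (mul_le_of_le_one_right ((he _).le.trans (heεt _ le_rfl)) (sub_le_self _ (by positivity)))

/-- Carleman–Kaplan–Hoischen: simultaneous approximation of a `C^r` function and its
derivatives up to order `r` by the restriction to `ℝ` of an entire function, with error
controlled pointwise by a prescribed positive continuous function. -/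
theorem carleman_kaplan_hoischen (r : ℕ) (f : ℝ → ℝ) (hf : ContDiff ℝ (r : ℕ∞) f)
    (ε : ℝ → ℝ) (hε : Continuous ε) (hεpos : ∀ t, 0 < ε t) :
    ∃ g : ℂ → ℂ, Differentiable ℂ g ∧ (∀ t : ℝ, (g t).im = 0) ∧
      ∀ k ≤ r, ∀ t : ℝ, |iteratedDeriv k (fun s : ℝ => f s - (g s).re) t| ≤ ε t :=
  carleman_kaplan_hoischen_general r f hf ε fun _ hK ↦
    hK.exists_forall_le' hε.continuousOn fun t _ ↦ hεpos t
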